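/- The set of 8-satisfactory colorings of K_8 — functions c : K_8 → {1,…,8} with c(i) = i for all i ∈ {1,…,8} such that for every a ∈ K_8 and all integers i, j with 1 ≤ i < j ≤ 8, c(ia) ≠ c(ja) — has the cardinality of the continuum, 2^{ℵ₀}. -/

import Mathlib

/-- The `n`-core: the set of `n`-smooth positive integers. -/
def Kcore (n : ℕ) : Set ℕ := {m : ℕ | 0 < m ∧ ∀ p : ℕ, p.Prime → p ∣ m → p ≤ n}

/-- `c : K_n → {1,…,n}` is an `n`-satisfactory coloring of `K_n`, normalized by
`c i = i` for `i ∈ {1,…,n}`. -/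
def IsSatisfactoryOnCore (n : ℕ) (c : ↥(Kcore n) → ℕ) : Prop :=
  (∀ x : ↥(Kcore n), (x : ℕ) ≤ n → c x = (x : ℕ)) ∧
  (∀ x : ↥(Kcore n), c x ∈ Finset.Icc 1 n) ∧
  (∀ a : ↥(Kcore n), ∀ i j : ℕ, 1 ≤ i → i < j → j ≤ n →
    ∀ x y : ↥(Kcore n), (x : ℕ) = i * (a : ℕ) → (y : ℕ) = j * (a : ℕ) →
      c x ≠ c y)

/-!
Grade the positive integers completely additively in `ℤ/4 × ℕ` by
`2 ↦ (1, 0)`, `3 ↦ (0, 1)`, `5 ↦ (2, 1)`, `7 ↦ (3, 1)`. Then `1, …, 8` represent each element of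
`ℤ/4 × {0, 1}` exactly once, so reducing the second coordinate modulo `2` and naming the result by
its representative gives a satisfactory coloring. The numbers `a, 2a, …, 8a` lie on only two
consecutive levels of the second coordinate, which have different parities. Hence the first
coordinate may be translated by an arbitrary amount on each level without destroying injectivity on
`a, 2a, …, 8a`. Leaving levels `0` and `1` alone keeps `c i = i`; the other translations are free
and can be recovered from the colors of the powers of `3`.
-/

open Cardinal hiding univ
open Set

universe u

theorem pow_mem_Kcore {n i : ℕ} (hi : i ∈ Icc 1 n) (k : ℕ) : i ^ k ∈ Kcore n :=
  ⟨pow_pos hi.1 k, fun _ hp hdvd =>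
    (Nat.le_of_dvd hi.1 (hp.dvd_of_dvd_pow hdvd)).trans hi.2⟩

theorem mk_isSatisfactoryOnCore_le_continuum (n : ℕ) :
    #{c : Kcore n → ℕ // IsSatisfactoryOnCore n c} ≤ 𝔠 :=
  calc #{c : Kcore n → ℕ // IsSatisfactoryOnCore n c}
      ≤ #(Kcore n → ℕ) := mk_subtype_le _
    _ = ℵ₀ ^ #(Kcore n) := by rw [← power_def, mk_nat]
    _ ≤ ℵ₀ ^ ℵ₀ := power_le_power_left aleph0_ne_zero mk_le_aleph0
    _ = 𝔠 := aleph0_power_aleph0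

/-- A completely additive grading of the positive integers by `A × ℕ` for which `1, …, n` are
representatives of the elements of `A × {0, …, m - 1}`. The second coordinate of the degree is
called the level. The degree of `0` is arbitrary. -/
structure CoreGrading (n m : ℕ) (A : Type*) [AddCommGroup A] where
  degree : ℕ → A × ℕ
  degree_mul : ∀ {x y : ℕ}, x ≠ 0 → y ≠ 0 → degree (x * y) = degree x + degree y
  bijOn_degree : BijOn degree (Icc 1 n) (univ ×ˢ Iio m)

namespace CoreGrading

variable {n m : ℕ} {A : Type u} [AddCommGroup A] (G : CoreGrading n m A)

theorem degree_one : G.degree 1 = 0 :=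
  left_eq_add.mp (G.degree_mul one_ne_zero one_ne_zero)

theorem degree_pow {x : ℕ} (hx : x ≠ 0) (k : ℕ) : G.degree (x ^ k) = k • G.degree x := by
  induction k with
  | zero => rw [pow_zero, zero_smul, degree_one]
  | succ k ih => rw [pow_succ, G.degree_mul (pow_ne_zero k hx) hx, ih, succ_nsmul]

theorem level_lt {i : ℕ} (hi : i ∈ Icc 1 n) : (G.degree i).2 < m :=
  (G.bijOn_degree.mapsTo hi).2

/-- The degree of `x` with its first coordinate translated by the value of `s` at the level of `x`,
and the level reduced modulo `m`. -/
def shiftedDegree (s : ℕ → A) (x : ℕ) : A × ℕ :=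
  ((G.degree x).1 + s (G.degree x).2, (G.degree x).2 % m)

/-- The coloring attached to a choice `s` of a translation of each level: the color of `x` is the
element of `{1, …, n}` whose degree is the shifted degree of `x`. -/
noncomputable def color (s : ℕ → A) (x : ℕ) : ℕ :=
  Function.invFunOn G.degree (Icc 1 n) (G.shiftedDegree s x)

theorem shiftedDegree_mem_image (hm : 0 < m) (s : ℕ → A) (x : ℕ) :
    G.shiftedDegree s x ∈ G.degree '' Icc 1 n := by
  rw [G.bijOn_degree.image_eq]
  exact ⟨mem_univ _, Nat.mod_lt _ hm⟩

theorem color_mem_Icc (hm : 0 < m) (s : ℕ → A) (x : ℕ) : G.color s x ∈ Icc 1 n :=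
  Function.invFunOn_mem (G.shiftedDegree_mem_image hm s x)

theorem degree_color (hm : 0 < m) (s : ℕ → A) (x : ℕ) :
    G.degree (G.color s x) = G.shiftedDegree s x :=
  Function.invFunOn_eq (G.shiftedDegree_mem_image hm s x)

theorem color_eq_self {s : ℕ → A} (hs : ∀ k < m, s k = 0) {i : ℕ} (hi : i ∈ Icc 1 n) :
    G.color s i = i := by
  have hlevel : (G.degree i).2 < m := G.level_lt hi
  have hm : 0 < m := Nat.zero_lt_of_lt hlevel
  refine G.bijOn_degree.injOn (G.color_mem_Icc hm s i) hi ?_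
  rw [G.degree_color hm, shiftedDegree, hs _ hlevel, add_zero, Nat.mod_eq_of_lt hlevel]

theorem injOn_color_mul (s : ℕ → A) {a : ℕ} (ha : a ≠ 0) :
    InjOn (fun i => G.color s (i * a)) (Icc 1 n) := by
  intro i hi j hj hcolor
  have hm : 0 < m := Nat.zero_lt_of_lt (G.level_lt hi)
  have hshifted : G.shiftedDegree s (i * a) = G.shiftedDegree s (j * a) := by
    rw [← G.degree_color hm, ← G.degree_color hm]
    exact congrArg G.degree hcolor
  simp only [shiftedDegree, G.degree_mul (Nat.ne_of_gt hi.1) ha,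
    G.degree_mul (Nat.ne_of_gt hj.1) ha, Prod.fst_add, Prod.snd_add, Prod.mk.injEq] at hshifted
  obtain ⟨hfst, hmod⟩ := hshifted
  have hlevel : (G.degree i).2 = (G.degree j).2 :=
    Nat.ModEq.eq_of_lt_of_lt (Nat.ModEq.add_right_cancel' _ hmod) (G.level_lt hi) (G.level_lt hj)
  rw [hlevel, add_left_inj, add_left_inj] at hfst
  exact G.bijOn_degree.injOn hi hj (Prod.ext hfst hlevel)

theorem isSatisfactoryOnCore_color (hm : 0 < m) {s : ℕ → A} (hs : ∀ k < m, s k = 0) :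
    IsSatisfactoryOnCore n (fun x => G.color s x) := by
  refine ⟨fun x hx => G.color_eq_self hs ⟨x.2.1, hx⟩,
    fun x => Finset.mem_Icc.mpr (G.color_mem_Icc hm s x), ?_⟩
  intro a i j hi hij hj x y hx hy hcolor
  beta_reduce at hcolor
  rw [hx, hy] at hcolor
  exact hij.ne (G.injOn_color_mul s a.2.1.ne' ⟨hi, hij.le.trans hj⟩ ⟨hi.trans hij.le, hj⟩ hcolor)

theorem color_injective (hm : 1 < m) :
    Function.Injective fun (s : ℕ → A) (x : Kcore n) => G.color s x := by
  intro s t hst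
  funext k
  obtain ⟨i, hi, hdegree⟩ : ((0, 1) : A × ℕ) ∈ G.degree '' Icc 1 n := by
    rw [G.bijOn_degree.image_eq]
    exact ⟨mem_univ _, hm⟩
  have hpow : G.degree (i ^ k) = (0, k) := by
    rw [G.degree_pow (Nat.ne_of_gt hi.1), hdegree, Prod.smul_mk, smul_zero, nsmul_one, Nat.cast_id]
  have hcolor : G.color s (i ^ k) = G.color t (i ^ k) :=
    congrFun hst ⟨i ^ k, pow_mem_Kcore hi k⟩
  have hshifted : G.shiftedDegree s (i ^ k) = G.shiftedDegree t (i ^ k) := by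
    rw [← G.degree_color (Nat.zero_lt_of_lt hm), ← G.degree_color (Nat.zero_lt_of_lt hm), hcolor]
  simpa only [shiftedDegree, hpow, zero_add] using congrArg Prod.fst hshifted

theorem continuum_le_mk_isSatisfactoryOnCore [Nontrivial A] (G : CoreGrading n m A)
    (hm : 1 < m) :
    𝔠 ≤ #{c : Kcore n → ℕ // IsSatisfactoryOnCore n c} := by
  have hadd : Function.Injective (m + ·) := add_right_injective m
  let shift (t : ℕ → A) : ℕ → A := Function.extend (m + ·) t 0
  have hshift (t : ℕ → A) : ∀ k < m, shift t k = 0 := fun k hk =>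
    Function.extend_apply' _ _ _ (by rintro ⟨l, rfl⟩; exact (Nat.le_add_right m l).not_gt hk)
  let coloring (t : ℕ → A) : {c : Kcore n → ℕ // IsSatisfactoryOnCore n c} :=
    ⟨fun x => G.color (shift t) x, G.isSatisfactoryOnCore_color (Nat.zero_lt_of_lt hm) (hshift t)⟩
  have hcoloring : Function.Injective coloring := fun t u htu =>
    Function.extend_injective hadd 0 (G.color_injective hm (congrArg Subtype.val htu))
  rw [← continuum_le_lift.{0, u}]
  calc 𝔠 = 2 ^ ℵ₀ := two_power_aleph0.symm
    _ ≤ #A ^ ℵ₀ := power_le_power_right (two_le_iff.mpr (exists_pair_ne A))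
    _ = #(ℕ → A) := by rw [mk_arrow, mk_nat, lift_aleph0, lift_uzero]
    _ ≤ lift.{u} #{c : Kcore n → ℕ // IsSatisfactoryOnCore n c} := by
      simpa only [lift_uzero] using lift_mk_le_lift_mk_of_injective hcoloring

theorem mk_isSatisfactoryOnCore_eq_continuum [Nontrivial A] (G : CoreGrading n m A)
    (hm : 1 < m) :
    #{c : Kcore n → ℕ // IsSatisfactoryOnCore n c} = 𝔠 :=
  (mk_isSatisfactoryOnCore_le_continuum n).antisymm (G.continuum_le_mk_isSatisfactoryOnCore hm)

end CoreGrading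

section AdditiveExtension

variable {M : Type*} [AddCommMonoid M] (w : ℕ → M)

/-- The completely additive function on the positive integers with value `w p` at each prime `p`.
Its value at `0` is `0`. -/
noncomputable def additiveExtension (x : ℕ) : M :=
  x.factorization.sum fun p k => k • w p

theorem additiveExtension_one : additiveExtension w 1 = 0 := by
  rw [additiveExtension, Nat.factorization_one, Finsupp.sum_zero_index]

theorem additiveExtension_mul {x y : ℕ} (hx : x ≠ 0) (hy : y ≠ 0) :
    additiveExtension w (x * y) = additiveExtension w x + additiveExtension w y := by
  rw [additiveExtension, Nat.factorization_mul hx hy]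
  exact Finsupp.sum_add_index' (fun _ => zero_nsmul _) fun _ _ _ => add_nsmul _ _ _

theorem additiveExtension_prime {p : ℕ} (hp : p.Prime) : additiveExtension w p = w p := by
  rw [additiveExtension, hp.factorization, Finsupp.sum_single_index (zero_nsmul (w p)), one_nsmul]

end AdditiveExtension

/-- The degrees in `ℤ/4 × ℕ` of the primes up to `8`, chosen so that `1, …, 8` represent
`ℤ/4 × {0, 1}`. -/
def eightPrimeDegree : ℕ → ZMod 4 × ℕ
  | 2 => (1, 0)
  | 3 => (0, 1)
  | 5 => (2, 1)
  | 7 => (3, 1)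
  | _ => 0

/-- The degrees of `1, …, 8` under the completely additive extension of `eightPrimeDegree`; the
entry at index `i` belongs to the number `i + 1`. -/
def eightDegreeTable : Fin 8 → ZMod 4 × ℕ :=
  ![(0, 0), (1, 0), (0, 1), (2, 0), (2, 1), (1, 1), (3, 1), (3, 0)]

theorem additiveExtension_eightPrimeDegree (i : Fin 8) :
    additiveExtension eightPrimeDegree (i + 1) = eightDegreeTable i := by
  have h2 := additiveExtension_prime eightPrimeDegree Nat.prime_two
  have h3 := additiveExtension_prime eightPrimeDegree Nat.prime_three
  have h4 := additiveExtension_mul eightPrimeDegree two_ne_zero two_ne_zero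
  have h5 := additiveExtension_prime eightPrimeDegree Nat.prime_five
  have h6 := additiveExtension_mul eightPrimeDegree two_ne_zero three_ne_zero
  have h7 := additiveExtension_prime eightPrimeDegree Nat.prime_seven
  have h8 := additiveExtension_mul eightPrimeDegree two_ne_zero four_ne_zero
  rw [h2, h3] at h6
  rw [h2] at h4
  rw [h2, h4] at h8
  fin_cases i
  exacts [additiveExtension_one _, h2, h3, h4, h5, h6, h7, h8]

theorem bijOn_additiveExtension_eightPrimeDegree :
    BijOn (additiveExtension eightPrimeDegree) (Icc 1 8) (univ ×ˢ Iio 2) := by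
  have hIcc : ∀ i ∈ Icc 1 8, ∃ k : Fin 8, (k : ℕ) + 1 = i := fun i hi =>
    ⟨⟨i - 1, by grind⟩, Nat.sub_add_cancel hi.1⟩
  have hlevel : ∀ k, (eightDegreeTable k).2 < 2 := by decide
  have hinj : Function.Injective eightDegreeTable := by decide
  have hsurj : ∀ a : ZMod 4, ∀ l < 2, ∃ k, eightDegreeTable k = (a, l) := by decide
  refine ⟨fun i hi => ?_, fun i hi j hj hij => ?_, fun ⟨a, l⟩ hal => ?_⟩
  · obtain ⟨k, rfl⟩ := hIcc i hi
    rw [additiveExtension_eightPrimeDegree]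
    exact ⟨mem_univ _, hlevel k⟩
  · obtain ⟨k, rfl⟩ := hIcc i hi
    obtain ⟨k', rfl⟩ := hIcc j hj
    rw [additiveExtension_eightPrimeDegree, additiveExtension_eightPrimeDegree] at hij
    rw [hinj hij]
  · obtain ⟨k, hk⟩ := hsurj a l hal.2
    exact ⟨k + 1, ⟨Nat.le_add_left 1 k, k.isLt⟩, (additiveExtension_eightPrimeDegree k).trans hk⟩

/-- The grading by `ℤ/4 × ℕ` with two levels, from which the colorings of `K_8` are obtained. -/
noncomputable def eightGrading : CoreGrading 8 2 (ZMod 4) where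
  degree := additiveExtension eightPrimeDegree
  degree_mul := additiveExtension_mul eightPrimeDegree
  bijOn_degree := bijOn_additiveExtension_eightPrimeDegree

/-- The set of 8-satisfactory colorings of `K_8` has the cardinality of the
continuum. -/
theorem continuum_many_eight_colorings :
    Cardinal.mk {c : ↥(Kcore 8) → ℕ // IsSatisfactoryOnCore 8 c} =
      Cardinal.continuum := by
  have : Fact (1 < 4) := ⟨by norm_num⟩
  exact eightGrading.mk_isSatisfactoryOnCore_eq_continuum Nat.one_lt_two
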